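/- arXiv:2510.15290 — 7 statements merged into one kernel-verified Lean document; each statement's English description precedes it below -/
import Mathlib

section
/- Let a and b be nonzero coprime integers and let d > 1 be an odd positive integer. Then d is good with respect to a and b if and only if gcd(d, ab) = 1 and there exists an integer s ≥ 1 such that for every prime p dividing d, the 2-adic valuation of ord_p(a·b⁻¹) equals s. -/
/-!
For a prime `p ∤ 2ab` put `c = a b⁻¹` in `ZMod p`, so that `p ∣ a ^ k + b ^ k` means `c ^ k = -1`.

If `c ^ k = -1`, the order of `c` divides `2 * k` but not `k`, hence its 2-adic valuation is
`ν₂(k) + 1`, which does not depend on `p`. Conversely, if all these orders have 2-adic valuation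
`s ≥ 1`, let `M` be the product of their odd parts. Then `c ^ (2 ^ (s - 1) * M) = -1` for every
`p ∣ d`, so with `K = 2 ^ (s - 1) * M` the radical `r` of `d` divides `a ^ K + b ^ K`. Since `r`
is odd, raising to the power `r ^ d` lifts this to
`r ^ (d + 1) ∣ a ^ (K * r ^ d) + b ^ (K * r ^ d)`, and `d ∣ r ^ d`.
-/

open scoped BigOperators

/-- A positive integer `ℓ` is *good* with respect to integers `a`, `b` if
`ℓ ∣ a ^ k + b ^ k` for some positive integer `k`. -/
def IsGood (a b : ℤ) (ℓ : ℕ) : Prop :=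
  ∃ k : ℕ, 0 < k ∧ (ℓ : ℤ) ∣ a ^ k + b ^ k

/-- The multiplicative order of `a * b⁻¹` modulo `n`. -/
noncomputable def ordAB (a b : ℤ) (n : ℕ) : ℕ :=
  orderOf ((a : ZMod n) * (b : ZMod n)⁻¹)

/-- The `ℓ`-part of `L` relative to `g`: the product of `p ^ ν_p(L)` over primes `p ∤ g`. -/
def ellPart (g L : ℕ) : ℕ :=
  ∏ p ∈ L.primeFactors.filter fun p => ¬ p ∣ g, p ^ L.factorization p

/-- The threshold `γ(L) = max_{p ∣ g} ⌈ν_p(L) / ν_p(g)⌉` (with `γ(L) = 0` when `g = 1`). -/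
def gammaL (g L : ℕ) : ℕ :=
  g.primeFactors.sup fun p => (L.factorization p + g.factorization p - 1) / g.factorization p

open UniqueFactorizationMonoid

lemma padicValNat_two_orderOf_of_pow_eq_neg_one {p : ℕ} [Fact p.Prime] (hp2 : p ≠ 2)
    {c : ZMod p} {k : ℕ} (hk : 0 < k) (h : c ^ k = -1) :
    padicValNat 2 (orderOf c) = padicValNat 2 k + 1 := by
  have : Fact (2 < p) := ⟨lt_of_le_of_ne (Fact.out (p := p.Prime)).two_le hp2.symm⟩
  have h2k : orderOf c ∣ 2 * k := by
    apply orderOf_dvd_of_pow_eq_one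
    rw [mul_comm, pow_mul, h]
    norm_num
  have hnk : ¬ orderOf c ∣ k := by
    intro hd
    rw [orderOf_dvd_iff_pow_eq_one, h] at hd
    exact ZMod.neg_one_ne_one hd
  have h0 : orderOf c ≠ 0 := ne_zero_of_dvd_ne_zero (by omega) h2k
  obtain ⟨e, m, hm, ho⟩ := Nat.exists_eq_two_pow_mul_odd h0
  obtain ⟨f, l, hl, rfl⟩ := Nat.exists_eq_two_pow_mul_odd hk.ne'
  have val (e m : ℕ) (hm : Odd m) : padicValNat 2 (2 ^ e * m) = e := by
    rw [padicValNat.mul (by positivity) hm.pos.ne', padicValNat.prime_pow,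
      padicValNat.eq_zero_of_not_dvd hm.not_two_dvd_nat, add_zero]
  rw [ho] at h2k hnk ⊢
  rw [val e m hm, val f l hl]
  have h2k' : 2 ^ e * m ∣ 2 ^ (f + 1) * l := by rwa [pow_succ', mul_assoc]
  have hml : m ∣ l :=
    (hm.coprime_two_right.pow_right _).dvd_of_dvd_mul_left ((Dvd.intro_left _ rfl).trans h2k')
  have hle : e ≤ f + 1 :=
    (Nat.pow_dvd_pow_iff_le_right (by norm_num)).1
      ((hl.coprime_two_left.pow_left _).dvd_of_dvd_mul_right ((Dvd.intro _ rfl).trans h2k'))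
  have hlt : ¬ e ≤ f := fun hef => hnk (mul_dvd_mul (pow_dvd_pow 2 hef) hml)
  omega

/-- The exponent `2 ^ (s - 1) * m` is an odd multiple of half the order of `c`. -/
lemma pow_eq_neg_one_of_padicValNat_two_orderOf {p : ℕ} [Fact p.Prime]
    {c : ZMod p} {s m : ℕ} (hs : 1 ≤ s) (h : padicValNat 2 (orderOf c) = s)
    (hm : Odd m) (hdvd : orderOf c / 2 ^ s ∣ m) : c ^ (2 ^ (s - 1) * m) = -1 := by
  obtain ⟨t, rfl⟩ : ∃ t, s = t + 1 := ⟨s - 1, by omega⟩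
  have ho : 2 ^ (t + 1) ∣ orderOf c := h ▸ pow_padicValNat_dvd
  rw [Nat.add_sub_cancel]
  have hsq : (c ^ (2 ^ t * m)) ^ 2 = 1 := by
    rw [← pow_mul, ← orderOf_dvd_iff_pow_eq_one]
    obtain ⟨q, hq⟩ := hdvd
    refine ⟨q, ?_⟩
    rw [hq]
    conv_rhs => rw [← Nat.mul_div_cancel' ho]
    ring
  refine (sq_eq_one_iff.1 hsq).resolve_left fun h1 => ?_
  have h2 : 2 ^ (t + 1) ∣ 2 ^ t * m := ho.trans (orderOf_dvd_of_pow_eq_one h1)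
  rw [pow_succ] at h2
  exact hm.not_two_dvd_nat (Nat.dvd_of_mul_dvd_mul_left (by positivity) h2)

lemma dvd_pow_add_pow_iff {p : ℕ} [Fact p.Prime] {a b : ℤ} (hb : ¬ (p : ℤ) ∣ b) (k : ℕ) :
    (p : ℤ) ∣ a ^ k + b ^ k ↔ ((a : ZMod p) * (b : ZMod p)⁻¹) ^ k = -1 := by
  have hb' : (b : ZMod p) ≠ 0 := by rwa [Ne, ZMod.intCast_zmod_eq_zero_iff_dvd]
  rw [← ZMod.intCast_zmod_eq_zero_iff_dvd, mul_pow, inv_pow, ← div_eq_mul_inv,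
    div_eq_iff (pow_ne_zero k hb'), neg_one_mul, ← add_eq_zero_iff_eq_neg]
  push_cast
  rfl

/-- Divisibility by an odd `r` lifts to powers of `r`. -/
lemma pow_dvd_pow_add_pow {r : ℕ} (hr : Odd r) {x y : ℤ} (h : (r : ℤ) ∣ x + y) (n : ℕ) :
    (r : ℤ) ^ (n + 1) ∣ x ^ r ^ n + y ^ r ^ n := by
  have := dvd_sub_pow_of_dvd_sub (R := ℤ) (p := r) (a := x) (b := -y) (by simpa using h) n
  rwa [hr.pow.neg_pow, sub_neg_eq_add] at this

theorem stmt3 (a b : ℤ) (ha : a ≠ 0) (hb : b ≠ 0) (hab : IsCoprime a b)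
    (d : ℕ) (hd : 1 < d) (hdodd : Odd d) :
    IsGood a b d ↔
      Int.gcd (d : ℤ) (a * b) = 1 ∧
        ∃ s : ℕ, 1 ≤ s ∧ ∀ p : ℕ, p.Prime → p ∣ d →
          padicValNat 2 (ordAB a b p) = s := by
  have hd0 : d ≠ 0 := by omega
  constructor
  · rintro ⟨k, hk, hdk⟩
    have key : ∀ p : ℕ, p.Prime → p ∣ d → ¬ (p : ℤ) ∣ a ∧ ¬ (p : ℤ) ∣ b := by
      intro p hp hpd
      have hpZ : Prime (p : ℤ) := Nat.prime_iff_prime_int.1 hp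
      have hpk : (p : ℤ) ∣ a ^ k + b ^ k := (Int.natCast_dvd_natCast.2 hpd).trans hdk
      refine ⟨fun h => ?_, fun h => ?_⟩
      · exact hpZ.not_isUnit (hab.isUnit_of_dvd' h
          (hpZ.dvd_of_dvd_pow ((dvd_add_right (dvd_pow h hk.ne')).1 hpk)))
      · exact hpZ.not_isUnit (hab.isUnit_of_dvd'
          (hpZ.dvd_of_dvd_pow ((dvd_add_left (dvd_pow h hk.ne')).1 hpk)) h)
    refine ⟨?_, padicValNat 2 k + 1, by omega, fun p hp hpd => ?_⟩
    · by_contra hne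
      obtain ⟨p, hp, hpg⟩ := Nat.exists_prime_and_dvd hne
      have hpg' : (p : ℤ) ∣ (Int.gcd (d : ℤ) (a * b) : ℤ) := Int.natCast_dvd_natCast.2 hpg
      have hpd : p ∣ d := Int.natCast_dvd_natCast.1 (hpg'.trans (Int.gcd_dvd_left ..))
      rcases (Nat.prime_iff_prime_int.1 hp).dvd_or_dvd (hpg'.trans (Int.gcd_dvd_right ..)) with h | h
      · exact (key p hp hpd).1 h
      · exact (key p hp hpd).2 h
    · have := Fact.mk hp
      refine padicValNat_two_orderOf_of_pow_eq_neg_one ?_ hk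
        ((dvd_pow_add_pow_iff (key p hp hpd).2 k).1 ((Int.natCast_dvd_natCast.2 hpd).trans hdk))
      rintro rfl
      exact hdodd.not_two_dvd_nat hpd
  · rintro ⟨hgcd, s, hs, hord⟩
    have hpb : ∀ p : ℕ, p.Prime → p ∣ d → ¬ (p : ℤ) ∣ b := by
      intro p hp hpd h
      exact (Nat.prime_iff_prime_int.1 hp).not_isUnit
        ((Int.isCoprime_iff_gcd_eq_one.2 hgcd).isUnit_of_dvd' (Int.natCast_dvd_natCast.2 hpd)
          (h.mul_left a))
    set M := ∏ p ∈ d.primeFactors, ordAB a b p / 2 ^ s with hM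
    have hModd : Odd M := by
      refine Finset.prod_induction _ Odd (fun _ _ => Odd.mul) odd_one fun p hp => ?_
      have hps := hord p (Nat.prime_of_mem_primeFactors hp) (Nat.dvd_of_mem_primeFactors hp)
      have h0 : ordAB a b p ≠ 0 := by
        intro h0
        simp [h0] at hps
        omega
      rw [← Nat.not_even_iff_odd, even_iff_two_dvd, ← hps]
      intro h2
      refine pow_succ_padicValNat_not_dvd (p := 2) h0 ?_
      rw [pow_succ]
      exact Nat.mul_dvd_of_dvd_div pow_padicValNat_dvd h2
    set K := 2 ^ (s - 1) * M with hK
    have hr : ((radical d : ℕ) : ℤ) ∣ a ^ K + b ^ K := by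
      rw [Nat.radical_eq_prod_primeFactors, Int.natCast_dvd]
      refine Finset.prod_primes_dvd _ (fun p hp => (Nat.prime_of_mem_primeFactors hp).prime)
        fun p hp => ?_
      have hp' := Nat.prime_of_mem_primeFactors hp
      have hpd := Nat.dvd_of_mem_primeFactors hp
      have := Fact.mk hp'
      rw [← Int.natCast_dvd, dvd_pow_add_pow_iff (hpb p hp' hpd)]
      exact pow_eq_neg_one_of_padicValNat_two_orderOf hs (hord p hp' hpd) hModd
        (Finset.dvd_prod_of_mem (fun p => ordAB a b p / 2 ^ s) hp)
    have hrodd : Odd (radical d) := Odd.of_dvd_nat hdodd radical_dvd_self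
    refine ⟨K * radical d ^ d, ?_, ?_⟩
    · have := hModd.pos
      have := hrodd.pos
      positivity
    · rw [pow_mul a K, pow_mul b K]
      refine dvd_trans ?_ (pow_dvd_pow_add_pow hrodd hr d)
      rw [pow_succ]
      exact_mod_cast (Nat.dvd_radical_pow_self hd0).mul_right _
end

section
/- Let a and b be coprime odd integers and let β ≥ 1. The following are equivalent: (i) 2^β is good with respect to a and b; (ii) 2^β divides a + b; (iii) a·b⁻¹ ≡ −1 (mod 2^β). -/
/-!
Split on the parity of the exponent `k` witnessing goodness of `2 ^ β`. If `k` is even then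
`a ^ k + b ^ k` is a sum of two odd squares, hence `≡ 2 (mod 4)`, so `β ≤ 1` and `2 ^ β ∣ a + b`
holds by parity. If `k` is odd then `a ^ k + b ^ k = (a + b) * c` with `c` odd
(`exists_odd_cofactor`), and `c` can be cancelled. The last condition is a restatement of
`a + b = 0` in `ZMod (2 ^ β)`, where `b` is a unit.
-/

open scoped BigOperators

/-- For odd exponents the cofactor of `a + b` in `a ^ k + b ^ k` is odd, by induction from
`a ^ (n + 2) + b ^ (n + 2) = a ^ 2 * (a ^ n + b ^ n) - b ^ n * (a - b) * (a + b)`. -/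
lemma exists_odd_cofactor {a b : ℤ} (ha : Odd a) (hb : Odd b) (m : ℕ) :
    ∃ c : ℤ, Odd c ∧ a ^ (2 * m + 1) + b ^ (2 * m + 1) = (a + b) * c := by
  induction m with
  | zero => exact ⟨1, odd_one, by ring⟩
  | succ m ih =>
    obtain ⟨c, hc, h⟩ := ih
    refine ⟨a ^ 2 * c - b ^ (2 * m + 1) * (a - b),
      (ha.pow.mul hc).sub_even ((ha.sub_odd hb).mul_left _), ?_⟩
    linear_combination a ^ 2 * h

lemma not_four_dvd_sq_add_sq {x y : ℤ} (hx : Odd x) (hy : Odd y) : ¬ (4 : ℤ) ∣ x ^ 2 + y ^ 2 := by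
  have h1 := Int.sq_mod_four_eq_one_of_odd hx
  have h2 := Int.sq_mod_four_eq_one_of_odd hy
  omega

theorem stmt4 (a b : ℤ) (ha : Odd a) (hb : Odd b) (hab : IsCoprime a b)
    (β : ℕ) (hβ : 1 ≤ β) :
    (IsGood a b (2 ^ β) ↔ (2 ^ β : ℤ) ∣ a + b) ∧
    ((2 ^ β : ℤ) ∣ a + b ↔
      (a : ZMod (2 ^ β)) * (b : ZMod (2 ^ β))⁻¹ = -1) := by
  have two_pow_coprime {c : ℤ} (hc : Odd c) : IsCoprime (2 ^ β : ℤ) c :=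
    (Int.isCoprime_two_left.mpr hc).pow_left
  refine ⟨⟨?_, fun h => ⟨1, one_pos, by simpa using h⟩⟩, ?_⟩
  · rintro ⟨k, -, hk⟩
    push_cast at hk
    rcases Nat.even_or_odd' k with ⟨m, rfl | rfl⟩
    · obtain rfl | hβ2 : β = 1 ∨ 2 ≤ β := by omega
      · simpa using (ha.add_odd hb).two_dvd
      · have h4 : (4 : ℤ) ∣ (a ^ m) ^ 2 + (b ^ m) ^ 2 := by
          rw [← pow_mul, ← pow_mul, mul_comm m 2]
          exact (pow_dvd_pow 2 hβ2).trans hk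
        exact absurd h4 (not_four_dvd_sq_add_sq ha.pow hb.pow)
    · obtain ⟨c, hc, h⟩ := exists_odd_cofactor ha hb m
      rw [h] at hk
      exact (two_pow_coprime hc).dvd_of_dvd_mul_right hk
  · have hbu : (b : ZMod (2 ^ β)) * (b : ZMod (2 ^ β))⁻¹ = 1 := by
      apply ZMod.coe_int_mul_inv_eq_one
      exact_mod_cast (two_pow_coprime hb).symm
    have hdvd : (2 ^ β : ℤ) ∣ a + b ↔ (a : ZMod (2 ^ β)) + b = 0 := by
      have := ZMod.intCast_zmod_eq_zero_iff_dvd (a + b) (2 ^ β)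
      push_cast at this
      exact this.symm
    rw [hdvd]
    constructor <;> intro h
    · linear_combination (b : ZMod (2 ^ β))⁻¹ * h - hbu
    · linear_combination (b : ZMod (2 ^ β)) * h - (a : ZMod (2 ^ β)) * hbu
end

section
/- Let a, b, and d > 1 be pairwise coprime odd integers. Then d is good with respect to a and b if and only if 2d is good with respect to a and b. Moreover, in this case ord_{2d}(a·b⁻¹) = ord_d(a·b⁻¹) and this common value is even. -/
/-!
Both `a ^ k + b ^ k` and `a ^ k - b ^ k` are even, so divisibility by the odd `d` and by `2 * d`
are equivalent for them (`two_mul_dvd_iff`). The first gives the equivalence of goodness; the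
second, through `(a * b⁻¹) ^ m = 1 ↔ n ∣ a ^ m - b ^ m` (`ratio_pow_eq_one_iff`), gives the
equality of the orders. If `d` is good then some power of `a * b⁻¹` is `-1` modulo `d`, and `-1`
has even order because `d > 2`.
-/

open scoped BigOperators

theorem two_mul_dvd_iff {d : ℕ} (hd : Odd d) {z : ℤ} (hz : Even z) :
    ((2 * d : ℕ) : ℤ) ∣ z ↔ (d : ℤ) ∣ z := by
  push_cast
  refine ⟨fun h => (Dvd.intro_left _ rfl).trans h, fun h => ?_⟩
  refine IsCoprime.mul_dvd ?_ hz.two_dvd h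
  exact_mod_cast Nat.isCoprime_iff_coprime.2 (Nat.coprime_two_left.2 hd)

theorem isUnit_intCast_zmod {b : ℤ} {n : ℕ} (h : Int.gcd b n = 1) : IsUnit (b : ZMod n) := by
  obtain ⟨u, v, huv⟩ := Int.isCoprime_iff_gcd_eq_one.2 h
  have hub : (u : ZMod n) * b = 1 := by
    simpa using congrArg (Int.cast : ℤ → ZMod n) huv
  exact IsUnit.of_mul_eq_one_right _ hub

theorem ratio_pow_mul {a b : ℤ} {n : ℕ} (h : Int.gcd b n = 1) (m : ℕ) :
    ((a : ZMod n) * (b : ZMod n)⁻¹) ^ m * (b : ZMod n) ^ m = (a : ZMod n) ^ m := by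
  rw [← mul_pow, mul_assoc, ZMod.inv_mul_of_unit _ (isUnit_intCast_zmod h), mul_one]

theorem ratio_pow_eq_one_iff {a b : ℤ} {n : ℕ} (h : Int.gcd b n = 1) (m : ℕ) :
    ((a : ZMod n) * (b : ZMod n)⁻¹) ^ m = 1 ↔ (n : ℤ) ∣ a ^ m - b ^ m := by
  rw [← ZMod.intCast_zmod_eq_zero_iff_dvd, ← ((isUnit_intCast_zmod h).pow m).mul_left_inj,
    ratio_pow_mul h, one_mul]
  push_cast
  exact sub_eq_zero.symm

theorem ratio_pow_eq_neg_one {a b : ℤ} {n : ℕ} (h : Int.gcd b n = 1) {k : ℕ}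
    (hk : (n : ℤ) ∣ a ^ k + b ^ k) : ((a : ZMod n) * (b : ZMod n)⁻¹) ^ k = -1 := by
  rw [← ((isUnit_intCast_zmod h).pow k).mul_left_inj, ratio_pow_mul h, neg_one_mul]
  rw [← ZMod.intCast_zmod_eq_zero_iff_dvd] at hk
  push_cast at hk
  exact eq_neg_of_add_eq_zero_left hk

theorem even_orderOf_of_pow_eq_neg_one {R : Type*} [Ring R] (hR : (-1 : R) ≠ 1) {x : R} {k : ℕ}
    (hk : x ^ k = -1) : Even (orderOf x) := by
  by_contra hodd
  rw [Nat.not_even_iff_odd] at hodd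
  -- If the order `n` is odd, then `-1 = (-1) ^ n = (x ^ n) ^ k = 1`.
  apply hR
  rw [← hodd.neg_one_pow, ← hk, ← pow_mul, mul_comm, pow_mul, pow_orderOf_eq_one, one_pow]

theorem stmt5 (a b : ℤ) (d : ℕ) (ha : Odd a) (hb : Odd b) (hd : 1 < d) (hdodd : Odd d)
    (hab : IsCoprime a b) (had : Int.gcd a d = 1) (hbd : Int.gcd b d = 1) :
    (IsGood a b d ↔ IsGood a b (2 * d)) ∧
    (IsGood a b d →
      ordAB a b (2 * d) = ordAB a b d ∧ Even (ordAB a b d)) := by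
  constructor
  · exact exists_congr fun k => and_congr_right fun _ =>
      (two_mul_dvd_iff hdodd (ha.pow.add_odd hb.pow)).symm
  · rintro ⟨k, -, hk⟩
    have hb2d : Int.gcd b (2 * d : ℕ) = 1 := by
      rw [← Int.isCoprime_iff_gcd_eq_one] at hbd ⊢
      push_cast
      exact IsCoprime.mul_right (Int.isCoprime_two_right.2 hb) hbd
    refine ⟨?_, ?_⟩
    · refine orderOf_eq_orderOf_iff.2 fun m => ?_
      rw [ratio_pow_eq_one_iff hb2d, ratio_pow_eq_one_iff hbd]
      exact two_mul_dvd_iff hdodd (ha.pow.sub_odd hb.pow)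
    · have h2 : 2 < d := by
        obtain ⟨r, rfl⟩ := hdodd
        omega
      have : Fact (2 < d) := ⟨h2⟩
      exact even_orderOf_of_pow_eq_neg_one ZMod.neg_one_ne_one (ratio_pow_eq_neg_one hbd hk)
end

section
/- Let a, b, and d > 1 be pairwise coprime odd integers with gcd(d, ab) = 1, and let β ≥ 2. Then 2^β·d is good with respect to a and b if and only if 2^β divides a + b, d is good with respect to a and b, and the 2-adic valuation of ord_d(a·b⁻¹) equals 1. In this case, ord_{2^β}(a·b⁻¹) = 2 and the 2-adic valuation of ord_{2^β d}(a·b⁻¹) equals 1. -/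
/-!
Write `x = a * b⁻¹` in `ZMod n`, with `b` a unit modulo `n`. Then `n ∣ a ^ k + b ^ k` says exactly
that `x ^ k = -1` (`dvd_iff_pow_eq_neg_one`), and for `n > 2` this forces `orderOf x ∣ 2 * k` and
`¬ orderOf x ∣ k`. Hence, for such a `k`, the order of `x` has 2-adic valuation `1` if and only if
`k` is odd (`padicValNat_orderOf_eq_one_iff`).

At the prime `2`, an even exponent gives `a ^ k + b ^ k ≡ 2 (mod 4)`, so `4 ∣ a ^ k + b ^ k` forces
`k` odd (`odd_of_four_dvd`). For odd `k` the cofactor of `a + b` in `a ^ k + b ^ k` is odd: it is a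
sum of `k` odd terms. So, for odd `k`, `2 ^ β ∣ a ^ k + b ^ k` is equivalent to `2 ^ β ∣ a + b`. The theorem is the
combination of these facts: the same exponent `k` serves for `d` and for `2 ^ β * d`.
-/


open scoped BigOperators

lemma dvd_iff_pow_eq_neg_one {a b : ℤ} {n : ℕ} (hb : Int.gcd b n = 1) (k : ℕ) :
    (n : ℤ) ∣ a ^ k + b ^ k ↔ ((a : ZMod n) * (b : ZMod n)⁻¹) ^ k = -1 := by
  have hu : (b : ZMod n) * (b : ZMod n)⁻¹ = 1 :=
    ZMod.coe_int_mul_inv_eq_one (Int.isCoprime_iff_gcd_eq_one.mpr hb)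
  have huk : (b : ZMod n) ^ k * (b : ZMod n)⁻¹ ^ k = 1 := by rw [← mul_pow, hu, one_pow]
  rw [← ZMod.intCast_zmod_eq_zero_iff_dvd]
  push_cast
  rw [mul_pow]
  constructor
  · intro h
    linear_combination ((b : ZMod n)⁻¹ ^ k) * h - huk
  · intro h
    linear_combination ((b : ZMod n) ^ k) * h - (a : ZMod n) ^ k * huk

lemma neg_one_ne_one_of_two_lt {n : ℕ} (hn : 2 < n) : (-1 : ZMod n) ≠ 1 :=
  haveI : Fact (2 < n) := ⟨hn⟩
  ZMod.neg_one_ne_one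

lemma padicValNat_orderOf_eq_one_iff {n : ℕ} (hn : 2 < n) {x : ZMod n} {k : ℕ} (hk : 0 < k)
    (hx : x ^ k = -1) : padicValNat 2 (orderOf x) = 1 ↔ Odd k := by
  have h1 : orderOf x ∣ 2 * k := by
    apply orderOf_dvd_of_pow_eq_one
    rw [mul_comm, pow_mul, hx]; norm_num
  have h2 : ¬ orderOf x ∣ k := by
    intro h
    rw [orderOf_dvd_iff_pow_eq_one, hx] at h
    exact neg_one_ne_one_of_two_lt hn h
  have h0 : orderOf x ≠ 0 := fun h => by
    rw [h, zero_dvd_iff] at h1; omega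
  constructor
  · intro hv
    obtain ⟨m, hm⟩ : 2 ∣ orderOf x := dvd_of_one_le_padicValNat hv.ge
    rw [hm] at h1 h2
    have hmk : m ∣ k := Nat.dvd_of_mul_dvd_mul_left two_pos h1
    have hmo : Odd m := by
      rw [← Nat.not_even_iff_odd, even_iff_two_dvd]
      rintro ⟨c, rfl⟩
      have h4 : 2 ^ 2 ∣ orderOf x := ⟨c, by rw [hm]; ring⟩
      have := (padicValNat_dvd_iff_le h0).mp h4
      omega
    by_contra hke
    rw [Nat.not_odd_iff_even, even_iff_two_dvd] at hke
    exact h2 (Nat.Coprime.mul_dvd_of_dvd_of_dvd (Nat.coprime_two_left.mpr hmo) hke hmk)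
  · intro hko
    apply le_antisymm
    · by_contra! hlt
      have h4 : 2 ^ 2 ∣ orderOf x := (padicValNat_dvd_iff_le h0).mpr hlt
      obtain ⟨c, hc⟩ := h4.trans h1
      obtain ⟨j, rfl⟩ := hko
      omega
    · apply one_le_padicValNat_of_dvd h0
      -- an odd order would be coprime to `2`, hence divide `k`
      by_contra hodd
      exact h2 (((Nat.prime_two.coprime_iff_not_dvd.mpr hodd).symm).dvd_of_dvd_mul_left h1)

lemma odd_of_four_dvd {a b : ℤ} (ha : Odd a) (hb : Odd b) {k : ℕ} (h : (4 : ℤ) ∣ a ^ k + b ^ k) :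
    Odd k := by
  by_contra hk
  obtain ⟨j, rfl⟩ := Nat.not_odd_iff_even.mp hk
  have h1 := Int.sq_mod_four_eq_one_of_odd (ha.pow (n := j))
  have h2 := Int.sq_mod_four_eq_one_of_odd (hb.pow (n := j))
  rw [← two_mul, mul_comm, pow_mul, pow_mul] at h
  omega

lemma odd_sum_range {f : ℕ → ℤ} (hf : ∀ i, Odd (f i)) (k : ℕ) :
    Odd (∑ i ∈ Finset.range k, f i) ↔ Odd k := by
  induction k with
  | zero => simp
  | succ k ih =>
    have := Int.not_even_iff_odd.mpr (hf k)
    rw [Finset.sum_range_succ, Int.odd_add, ih, Nat.odd_add_one]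
    tauto

/-- For odd `k`, the quotient of `a ^ k + b ^ k` by `a + b` is a sum of `k` odd terms, hence odd,
so it does not affect divisibility by powers of two. -/
lemma two_pow_dvd_add {a b : ℤ} (ha : Odd a) (hb : Odd b) {k β : ℕ} (hk : Odd k)
    (h : (2 ^ β : ℤ) ∣ a ^ k + b ^ k) : (2 ^ β : ℤ) ∣ a + b := by
  have hS : Odd (∑ i ∈ Finset.range k, a ^ i * (-b) ^ (k - 1 - i)) :=
    (odd_sum_range (fun _ => ha.pow.mul hb.neg.pow) k).mpr hk
  have hfac := geom_sum₂_mul a (-b) k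
  rw [hk.neg_pow, sub_neg_eq_add, sub_neg_eq_add] at hfac
  rw [← hfac] at h
  refine IsCoprime.dvd_of_dvd_mul_left ?_ h
  exact (Int.isCoprime_two_left.mpr hS).pow_left

theorem stmt6 (a b : ℤ) (d : ℕ) (ha : Odd a) (hb : Odd b) (hd : 1 < d) (hdodd : Odd d)
    (hab : IsCoprime a b) (had : Int.gcd a d = 1) (hbd : Int.gcd b d = 1)
    (hdab : Int.gcd (d : ℤ) (a * b) = 1) (β : ℕ) (hβ : 2 ≤ β) :
    (IsGood a b (2 ^ β * d) ↔
      (2 ^ β : ℤ) ∣ a + b ∧ IsGood a b d ∧ padicValNat 2 (ordAB a b d) = 1) ∧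
    (IsGood a b (2 ^ β * d) →
      ordAB a b (2 ^ β) = 2 ∧ padicValNat 2 (ordAB a b (2 ^ β * d)) = 1) := by
  have h4 : (4 : ℤ) ∣ 2 ^ β := pow_dvd_pow 2 hβ
  have hβ4 : 4 ≤ 2 ^ β := Nat.pow_le_pow_right two_pos hβ
  have hd2 : 2 < d := by
    obtain ⟨j, rfl⟩ := hdodd
    omega
  have hn2 : 2 < 2 ^ β * d := by nlinarith
  have hb2 : IsCoprime b ((2 ^ β : ℕ) : ℤ) := by
    push_cast
    exact (Int.isCoprime_two_right.mpr hb).pow_right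
  have hbn : Int.gcd b (2 ^ β * d : ℕ) = 1 := by
    rw [← Int.isCoprime_iff_gcd_eq_one]
    push_cast at hb2 ⊢
    exact hb2.mul_right (Int.isCoprime_iff_gcd_eq_one.mpr hbd)
  -- An exponent witnessing that `2 ^ β * d` is good is odd, since `4 ∣ 2 ^ β`.
  have key : ∀ k : ℕ, ((2 ^ β * d : ℕ) : ℤ) ∣ a ^ k + b ^ k →
      Odd k ∧ (2 ^ β : ℤ) ∣ a + b ∧ (d : ℤ) ∣ a ^ k + b ^ k := by
    intro k hk
    push_cast at hk
    have hk2 := (dvd_mul_right _ _).trans hk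
    have hko := odd_of_four_dvd ha hb (h4.trans hk2)
    exact ⟨hko, two_pow_dvd_add ha hb hko hk2, (dvd_mul_left _ _).trans hk⟩
  refine ⟨⟨?_, ?_⟩, ?_⟩
  · rintro ⟨k, hk0, hk⟩
    obtain ⟨hko, hs, hkd⟩ := key k hk
    exact ⟨hs, ⟨k, hk0, hkd⟩, (padicValNat_orderOf_eq_one_iff hd2 hk0
      ((dvd_iff_pow_eq_neg_one hbd k).mp hkd)).mpr hko⟩
  · rintro ⟨hs, ⟨k, hk0, hkd⟩, hv⟩
    have hko := (padicValNat_orderOf_eq_one_iff hd2 hk0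
      ((dvd_iff_pow_eq_neg_one hbd k).mp hkd)).mp hv
    refine ⟨k, hk0, ?_⟩
    push_cast
    refine IsCoprime.mul_dvd ?_ (hs.trans (hko.add_dvd_pow_add_pow a b)) hkd
    exact (Int.isCoprime_two_left.mpr (by exact_mod_cast hdodd)).pow_left
  · rintro ⟨k, hk0, hk⟩
    obtain ⟨hko, hs, -⟩ := key k hk
    refine ⟨?_, (padicValNat_orderOf_eq_one_iff hn2 hk0
      ((dvd_iff_pow_eq_neg_one hbn k).mp hk)).mpr hko⟩
    have hx := (dvd_iff_pow_eq_neg_one (a := a) (Int.isCoprime_iff_gcd_eq_one.mp hb2) 1).mp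
      (by simpa using hs)
    rw [pow_one] at hx
    unfold ordAB
    rw [hx]
    exact orderOf_eq_prime (by norm_num) (neg_one_ne_one_of_two_lt (by omega))
end

section
/- Let a and b be coprime positive integers and let ℓ be a positive integer with ℓ ∉ {1, 2} that is good with respect to a and b. Then any two elements of 𝒦_{(a,b)}(ℓ) = {k ∈ ℕ⁺ : ℓ ∣ a^k + b^k} have the same parity, i.e., for all k, m ∈ 𝒦_{(a,b)}(ℓ), k ≡ m (mod 2). -/
/-!
Suppose `k` is even, `m` is odd, and `ℓ` divides both `a ^ k + b ^ k` and `a ^ m + b ^ m`.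
Raising `a ^ k ≡ -b ^ k` to the odd power `m` gives `a ^ (k * m) ≡ -b ^ (k * m)` modulo `ℓ`, while
raising `a ^ m ≡ -b ^ m` to the even power `k` gives `a ^ (k * m) ≡ b ^ (k * m)`. Hence `ℓ` divides
`2 * a ^ (k * m)` and `2 * b ^ (k * m)`, and so `ℓ ∣ 2` by coprimality, which leaves only
`ℓ = 1` and `ℓ = 2` (`dvd_two_of_even_of_odd`).
-/

open scoped BigOperators

/-- The parity obstruction: if both divisibilities hold with `k` even and `m` odd, then
`a ^ (k * m)` is congruent to both `-b ^ (k * m)` and `b ^ (k * m)` modulo `ℓ`, forcing `ℓ ∣ 2`. -/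
theorem dvd_two_of_even_of_odd {a b ℓ : ℤ} (hab : IsCoprime a b) {k m : ℕ}
    (hk : Even k) (hm : Odd m) (h : ℓ ∣ a ^ k + b ^ k) (h' : ℓ ∣ a ^ m + b ^ m) : ℓ ∣ 2 := by
  have hplus : ℓ ∣ a ^ (k * m) + b ^ (k * m) := by
    rw [pow_mul, pow_mul]
    exact h.trans (hm.add_dvd_pow_add_pow _ _)
  have hminus : ℓ ∣ a ^ (k * m) - b ^ (k * m) := by
    have := sub_dvd_pow_sub_pow (a ^ m) (-b ^ m) k
    rw [hk.neg_pow, sub_neg_eq_add, ← pow_mul, ← pow_mul, mul_comm m k] at this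
    exact h'.trans this
  obtain ⟨u, v, huv⟩ : IsCoprime (a ^ (k * m)) (b ^ (k * m)) := hab.pow
  have h2 : (2 : ℤ) = (u + v) * (a ^ (k * m) + b ^ (k * m))
      + (u - v) * (a ^ (k * m) - b ^ (k * m)) := by
    linear_combination -2 * huv
  rw [h2]
  exact dvd_add (hplus.mul_left _) (hminus.mul_left _)

theorem stmt9 (a b : ℕ) (ha : 0 < a) (hb : 0 < b) (hab : Nat.Coprime a b)
    (ℓ : ℕ) (hℓ : 0 < ℓ) (h1 : ℓ ≠ 1) (h2 : ℓ ≠ 2)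
    (hgood : IsGood (a : ℤ) (b : ℤ) ℓ) :
    ∀ k ∈ {k : ℕ | 0 < k ∧ (ℓ : ℤ) ∣ (a : ℤ) ^ k + (b : ℤ) ^ k},
      ∀ m ∈ {k : ℕ | 0 < k ∧ (ℓ : ℤ) ∣ (a : ℤ) ^ k + (b : ℤ) ^ k},
        k ≡ m [MOD 2] := by
  rintro k ⟨-, hk⟩ m ⟨-, hm⟩
  have hcop : IsCoprime (a : ℤ) (b : ℤ) := Nat.isCoprime_iff_coprime.mpr hab
  have hnot : ¬ (ℓ : ℤ) ∣ 2 := fun h => by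
    have h' : ℓ ∣ 2 := by exact_mod_cast h
    rcases (Nat.dvd_prime Nat.prime_two).mp h' with h | h
    · exact h1 h
    · exact h2 h
  rcases Nat.even_or_odd k with ek | ok <;> rcases Nat.even_or_odd m with em | om
  · exact (Nat.even_iff.mp ek).trans (Nat.even_iff.mp em).symm
  · exact absurd (dvd_two_of_even_of_odd hcop ek om hk hm) hnot
  · exact absurd (dvd_two_of_even_of_odd hcop em ok hm hk) hnot
  · exact (Nat.odd_iff.mp ok).trans (Nat.odd_iff.mp om).symm
end

section
/- Let A and B be nonzero integers with g = gcd(A, B), write A = g·a and B = g·b with gcd(a, b) = 1, and let L be a positive integer with ℓ-part ℓ = ∏_{p prime, p ∤ g} p^{ν_p(L)}. If there exists a positive integer k such that ℓ divides a^k + b^k, then there exists a positive integer K such that L divides A^K + B^K. -/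
/-!
Put `g = gcd A B`, so `A ^ K + B ^ K = g ^ K * (a ^ K + b ^ K)`, and split `L` as the product of
its `ℓ`-part with the complementary product of the `p ^ ν_p(L)` over primes `p ∣ g`. The latter
divides `g ^ K` as soon as `K ≥ L`. For an odd multiple `K = k * m`, the number
`a ^ k + b ^ k` divides `a ^ K + b ^ K`, hence so does the `ℓ`-part. Taking `m = 2 * L + 1`
meets both requirements.
-/

open scoped BigOperators

/-- The part of `L` composed of primes dividing `g` divides every sufficiently high power of `g`;
`L` bounds all the exponents `ν_p(L)`. -/
theorem prod_filter_dvd_pow (g L K : ℕ) (hL : 0 < L) (hK : L ≤ K) :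
    (∏ p ∈ L.primeFactors.filter fun p => p ∣ g, p ^ L.factorization p) ∣ g ^ K := by
  apply Finset.prod_dvd_of_isRelPrime
  · intro p hp q hq hpq
    have hp' := Nat.prime_of_mem_primeFactors (Finset.mem_filter.mp hp).1
    have hq' := Nat.prime_of_mem_primeFactors (Finset.mem_filter.mp hq).1
    exact Nat.coprime_iff_isRelPrime.mp
      (Nat.Coprime.pow _ _ ((Nat.coprime_primes hp' hq').mpr hpq))
  · intro p hp
    have hlt : L.factorization p < L := Nat.factorization_lt p hL.ne'
    exact (pow_dvd_pow_of_dvd (Finset.mem_filter.mp hp).2 _).trans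
      (pow_dvd_pow g (hlt.le.trans hK))

theorem ellPart_mul_prod_filter (g L : ℕ) (hL : 0 < L) :
    (∏ p ∈ L.primeFactors.filter fun p => p ∣ g, p ^ L.factorization p) * ellPart g L = L := by
  unfold ellPart
  rw [Finset.prod_filter_mul_prod_filter_not]
  exact Nat.prod_factorization_pow_eq_self hL.ne'

theorem stmt11 (A B : ℤ) (hA : A ≠ 0) (hB : B ≠ 0) (a b : ℤ)
    (hAa : A = (Int.gcd A B : ℤ) * a) (hBb : B = (Int.gcd A B : ℤ) * b)
    (hab : IsCoprime a b) (L : ℕ) (hL : 0 < L)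
    (h : ∃ k : ℕ, 0 < k ∧ (ellPart (Int.gcd A B) L : ℤ) ∣ a ^ k + b ^ k) :
    ∃ K : ℕ, 0 < K ∧ (L : ℤ) ∣ A ^ K + B ^ K := by
  obtain ⟨k, hk, hdvd⟩ := h
  refine ⟨k * (2 * L + 1), by positivity, ?_⟩
  have hK : L ≤ k * (2 * L + 1) := by nlinarith
  have hg : ((∏ p ∈ L.primeFactors.filter fun p => p ∣ Int.gcd A B,
      p ^ L.factorization p : ℕ) : ℤ) ∣ (Int.gcd A B : ℤ) ^ (k * (2 * L + 1)) := by
    exact_mod_cast prod_filter_dvd_pow (Int.gcd A B) L _ hL hK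
  have hodd : a ^ k + b ^ k ∣ a ^ (k * (2 * L + 1)) + b ^ (k * (2 * L + 1)) := by
    rw [pow_mul, pow_mul]
    exact Odd.add_dvd_pow_add_pow _ _ ⟨L, rfl⟩
  have hfac : A ^ (k * (2 * L + 1)) + B ^ (k * (2 * L + 1)) =
      (Int.gcd A B : ℤ) ^ (k * (2 * L + 1)) *
        (a ^ (k * (2 * L + 1)) + b ^ (k * (2 * L + 1))) := by
    rw [mul_add (_ ^ _), ← mul_pow, ← mul_pow, ← hAa, ← hBb]
  have hmul := mul_dvd_mul hg (hdvd.trans hodd)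
  rw [← Nat.cast_mul, ellPart_mul_prod_filter _ _ hL] at hmul
  rwa [hfac]
end

section
/- Let A and B be nonzero integers with g = gcd(A, B), write A = g·a and B = g·b with gcd(a, b) = 1, and let L ≥ 2 be an integer with ℓ-part ℓ = ∏_{p prime, p ∤ g} p^{ν_p(L)}. Then L is good with respect to A and B if and only if ℓ is good with respect to a and b. -/
/-!
Write `L = ℓ * m`, where `ℓ = ellPart g L` collects the prime powers of `L` at primes not dividing
`g` and `m` those at primes dividing `g`. Since `A ^ k + B ^ k = g ^ k * (a ^ k + b ^ k)`:

* if `L` divides the left side then so does `ℓ`, and `ℓ` is coprime to `g ^ k`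
  (`ellPart_coprime`), so `ℓ ∣ a ^ k + b ^ k`;
* if `ℓ ∣ a ^ k + b ^ k`, then `ℓ` also divides `a ^ (k * n) + b ^ (k * n)` for every odd `n`, while
  `m ∣ g ^ (k * n)` as soon as `k * n ≥ L` (`exists_cofactor`); `n = 2 * L + 1` works.
-/

open scoped BigOperators

theorem ellPart_coprime (g L : ℕ) : (ellPart g L).Coprime g := by
  refine Nat.Coprime.prod_left fun p hp => ?_
  rw [Finset.mem_filter] at hp
  exact Nat.Coprime.pow_left _
    ((Nat.Prime.coprime_iff_not_dvd (Nat.prime_of_mem_primeFactors hp.1)).2 hp.2)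

/-- The complementary part `m` of `L` divides `g ^ L`, because each of its prime powers
`p ^ ν_p(L)` has `p ∣ g` and `ν_p(L) ≤ L`. -/
theorem exists_cofactor (g L : ℕ) (hL : L ≠ 0) : ∃ m, ellPart g L * m = L ∧ m ∣ g ^ L := by
  refine ⟨∏ p ∈ L.primeFactors.filter fun p => ¬ ¬ p ∣ g, p ^ L.factorization p, ?_, ?_⟩
  · rw [ellPart, Finset.prod_filter_mul_prod_filter_not]
    exact Nat.prod_factorization_pow_eq_self hL
  · refine Finset.prod_dvd_of_isRelPrime ?_ ?_
    · intro p hp q hq hpq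
      simp only [Finset.coe_filter, Set.mem_ofPred_eq] at hp hq
      exact Nat.coprime_iff_isRelPrime.1 <| Nat.Coprime.pow _ _ <|
        (Nat.coprime_primes (Nat.prime_of_mem_primeFactors hp.1)
          (Nat.prime_of_mem_primeFactors hq.1)).2 hpq
    · intro p hp
      rw [Finset.mem_filter, not_not] at hp
      exact (pow_dvd_pow_of_dvd hp.2 _).trans
        (pow_dvd_pow g (Nat.factorization_lt p hL).le)

theorem stmt12 (A B : ℤ) (hA : A ≠ 0) (hB : B ≠ 0) (a b : ℤ)
    (hAa : A = (Int.gcd A B : ℤ) * a) (hBb : B = (Int.gcd A B : ℤ) * b)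
    (hab : IsCoprime a b) (L : ℕ) (hL : 2 ≤ L) :
    IsGood A B L ↔ IsGood a b (ellPart (Int.gcd A B) L) := by
  have hsum (k : ℕ) : A ^ k + B ^ k = (Int.gcd A B : ℤ) ^ k * (a ^ k + b ^ k) := by
    rw [mul_add, ← mul_pow, ← mul_pow, ← hAa, ← hBb]
  generalize Int.gcd A B = g at *
  obtain ⟨m, hm, hmg⟩ := exists_cofactor g L (by omega)
  constructor
  · rintro ⟨k, hk, h⟩
    refine ⟨k, hk, ?_⟩
    rw [hsum] at h
    have hcop : IsCoprime (ellPart g L : ℤ) ((g : ℤ) ^ k) :=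
      (Nat.isCoprime_iff_coprime.2 (ellPart_coprime g L)).pow_right
    refine hcop.dvd_of_dvd_mul_left (dvd_trans ?_ h)
    exact Int.natCast_dvd_natCast.2 (Dvd.intro m hm)
  · rintro ⟨k, hk, h⟩
    refine ⟨k * (2 * L + 1), by positivity, ?_⟩
    rw [hsum]
    have hLm : (L : ℤ) = (m : ℤ) * (ellPart g L : ℤ) := by
      rw [mul_comm]
      exact_mod_cast hm.symm
    rw [hLm]
    refine mul_dvd_mul ?_ ?_
    · have hle : L ≤ k * (2 * L + 1) := by nlinarith
      exact_mod_cast hmg.trans (pow_dvd_pow g hle)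
    · rw [pow_mul, pow_mul]
      exact h.trans (Odd.add_dvd_pow_add_pow _ _ ⟨L, rfl⟩)
end
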